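/- There is a constant d such that for every b ∈ ℕ, every A ∈ 2^ℕ that is C-trivial via constant b (i.e., C(A↾n) ≤ C(n) + b for all n) is K-trivial via constant 2b + d (i.e., K(A↾n) ≤ K(n) + 2b + d for all n). -/

import Mathlib

open MeasureTheory Filter

/-- Cantor space: the space of infinite binary sequences. -/
abbrev Cantor : Type := ℕ → Bool

/-- Finite binary strings. -/
abbrev BStr : Type := List Bool

/-- The cylinder set of sequences extending the string `x`. -/
def cyl (x : BStr) : Set Cantor := {Z | ∀ i : Fin x.length, Z i.1 = x.get i}

/-- The string of the first `n` bits of `Z`. -/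
def seg (Z : Cantor) (n : ℕ) : BStr := List.ofFn fun i : Fin n => Z i.1

/-- `lam` is the uniform (fair-coin product) measure: every cylinder `[x]`
has measure `2^{-|x|}`. -/
def IsUniform (lam : Measure Cantor) : Prop :=
  ∀ x : BStr, lam (cyl x) = (2 : ENNReal)⁻¹ ^ x.length

/-- `(G_m)` is a Martin-Löf test with respect to the measure `ρ`:
the sets `G_m` are uniformly effectively open and `ρ (G_m) ≤ 2^{-m}`. -/
def IsMLTest (ρ : Measure Cantor) (G : ℕ → Set Cantor) : Prop :=
  (∃ σ : ℕ → ℕ → BStr, Computable₂ σ ∧ ∀ m, G m = ⋃ i, cyl (σ m i)) ∧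
  ∀ m, ρ (G m) ≤ (2 : ENNReal)⁻¹ ^ m

/-- `μ` is Martin-Löf absolutely continuous in `ρ`: `inf_m μ(G_m) = 0`
for every `ρ`-Martin-Löf test `(G_m)`. -/
def MLAC (μ ρ : Measure Cantor) : Prop :=
  ∀ G : ℕ → Set Cantor, IsMLTest ρ G → ⨅ m, μ (G m) = 0

/-- `Z` is Martin-Löf random with respect to `lam`. -/
def MLRandom (lam : Measure Cantor) (Z : Cantor) : Prop :=
  ∀ G : ℕ → Set Cantor, IsMLTest lam G → Z ∉ ⋂ m, G m

/-- `ρ` is a computable measure: `ρ [x]` is a computable real, uniformly in `x`. -/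
def ComputableMeasure (ρ : Measure Cantor) : Prop :=
  ∃ q : BStr → ℕ → ℚ, Computable₂ q ∧
    ∀ x k, |(q x k : ℝ) - (ρ (cyl x)).toReal| ≤ (2 : ℝ)⁻¹ ^ k

/-- `U` is a universal plain machine. -/
def UniversalPlain (U : BStr →. BStr) : Prop :=
  Partrec U ∧ ∀ M : BStr →. BStr, Partrec M →
    ∃ c : ℕ, ∀ p x, x ∈ M p → ∃ q : BStr, q.length ≤ p.length + c ∧ x ∈ U q

/-- The domain of `M` is an antichain under the prefix relation. -/
def PrefixFreeDom (M : BStr →. BStr) : Prop :=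
  ∀ p q : BStr, (M p).Dom → (M q).Dom → p <+: q → p = q

/-- `U` is a universal prefix-free machine. -/
def UniversalPrefixFree (U : BStr →. BStr) : Prop :=
  Partrec U ∧ PrefixFreeDom U ∧
  ∀ M : BStr →. BStr, Partrec M → PrefixFreeDom M →
    ∃ c : ℕ, ∀ p x, x ∈ M p → ∃ q : BStr, q.length ≤ p.length + c ∧ x ∈ U q

/-- Kolmogorov complexity of the string `x` with respect to the machine `U`:
the minimal length of a `U`-description of `x`. -/
noncomputable def cpx (U : BStr →. BStr) (x : BStr) : ℕ :=
  sInf {n | ∃ q : BStr, q.length = n ∧ x ∈ U q}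

/-- A natural number `n` identified with the string `0^n`. -/
def numStr (n : ℕ) : BStr := List.replicate n false

/-- Complexity of the natural number `n` (i.e., of the string `0^n`). -/
noncomputable def cpxN (U : BStr →. BStr) (n : ℕ) : ℕ := cpx U (numStr n)

/-- The `μ`-average complexity of the strings of length `n`:
`Σ_{|x|=n} cpx(x) · μ[x]`. -/
noncomputable def avgCpx (U : BStr →. BStr) (μ : Measure Cantor) (n : ℕ) : ℝ :=
  ∑ v : Fin n → Bool, (cpx U (List.ofFn v) : ℝ) * (μ (cyl (List.ofFn v))).toReal

/-- A measure `μ` is trivial for the complexity given by the machine `U`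
(e.g. K-trivial when `U` is the universal prefix-free machine, C-trivial
when `U` is the universal plain machine). -/
def MeasTrivial (U : BStr →. BStr) (μ : Measure Cantor) : Prop :=
  ∃ c : ℝ, ∀ n : ℕ, avgCpx U μ n ≤ (cpxN U n : ℝ) + c

/-!
Let `A` be C-trivial via `b`. Every `m` with `n ≤ m < n + 2 ^ n` has plain complexity at most
`n + O(1)`, so for each such `m` the string `A↾m` has a program of length less than `n + k`, where
`k = b + O(1)`. There are fewer than `2 ^ (n + k)` such programs, and programs belonging to
different strings of length `n` or to different `m` are distinct; hence at most `2 ^ k` strings of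
length `n` can have `2 ^ n` short extensions as `A↾n` does. These strings can be enumerated
uniformly in `n` and `k`, so `A↾n` is determined by `n` together with a `k`-bit index in the
enumeration. Since `k` is itself read off from the length of the index, a self-delimiting index of
length `2 k + 1` followed by a shortest prefix-free description of `n` describes `A↾n`.
-/

/-! ### Complexity with respect to a machine -/

theorem cpx_le_length {U : BStr →. BStr} {x p : BStr} (h : x ∈ U p) : cpx U x ≤ p.length :=
  Nat.sInf_le ⟨p, rfl, h⟩

theorem exists_length_eq_cpx {U : BStr →. BStr} {x p : BStr} (h : x ∈ U p) :
    ∃ q : BStr, q.length = cpx U x ∧ x ∈ U q :=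
  Nat.sInf_mem (s := {n | ∃ q : BStr, q.length = n ∧ x ∈ U q}) ⟨p.length, p, rfl, h⟩

theorem UniversalPlain.exists_cpx_le {U M : BStr →. BStr} (hU : UniversalPlain U)
    (hM : Partrec M) : ∃ c, ∀ p x, x ∈ M p → cpx U x ≤ p.length + c := by
  obtain ⟨c, hc⟩ := hU.2 M hM
  refine ⟨c, fun p x hx => ?_⟩
  obtain ⟨q, hq, hxq⟩ := hc p x hx
  exact (cpx_le_length hxq).trans hq

theorem UniversalPlain.exists_mem {U : BStr →. BStr} (hU : UniversalPlain U) (x : BStr) :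
    ∃ p, x ∈ U p := by
  obtain ⟨c, hc⟩ := hU.2 (fun _ => Part.some x) (Computable.const x)
  obtain ⟨q, -, hq⟩ := hc [] x (Part.mem_some x)
  exact ⟨q, hq⟩

theorem UniversalPrefixFree.exists_cpx_le {U M : BStr →. BStr} (hU : UniversalPrefixFree U)
    (hM : Partrec M) (hpf : PrefixFreeDom M) : ∃ c, ∀ p x, x ∈ M p → cpx U x ≤ p.length + c := by
  obtain ⟨c, hc⟩ := hU.2.2 M hM hpf
  refine ⟨c, fun p x hx => ?_⟩
  obtain ⟨q, hq, hxq⟩ := hc p x hx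
  exact (cpx_le_length hxq).trans hq

theorem UniversalPrefixFree.exists_mem {U : BStr →. BStr} (hU : UniversalPrefixFree U)
    (x : BStr) : ∃ p, x ∈ U p := by
  let M : BStr →. BStr := fun p => Part.ofOption (if p = [] then some x else none)
  have hM : Partrec M :=
    Computable.ofOption (Primrec.ite (Primrec.eq.comp Primrec.id (Primrec.const []))
      (Primrec.const (some x)) (Primrec.const none)).to_comp
  have eq_nil {p : BStr} (hp : (M p).Dom) : p = [] := by
    by_contra hne
    simp [M, hne] at hp
  obtain ⟨c, hc⟩ := hU.2.2 M hM fun p q hp hq _ => (eq_nil hp).trans (eq_nil hq).symm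
  obtain ⟨q, -, hq⟩ := hc [] x (by simp [M])
  exact ⟨q, hq⟩

/-! ### Binary numerals -/

/-- The natural number with binary expansion `p`, least significant bit first; leading zeros are
allowed, so that the strings of length `l` represent exactly the numbers below `2 ^ l`. -/
def binVal (p : BStr) : ℕ := p.foldr Nat.bit 0

theorem primrec_binVal : Primrec binVal := by
  refine Primrec.list_foldr Primrec.id (Primrec.const 0)
    (h := fun _ (w : Bool × ℕ) => Nat.bit w.1 w.2) ?_
  exact Primrec.cond (Primrec.fst.comp Primrec.snd)
    (Primrec.nat_double_succ.comp (Primrec.snd.comp Primrec.snd))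
    (Primrec.nat_double.comp (Primrec.snd.comp Primrec.snd))

theorem exists_binVal_eq {l j : ℕ} (hj : j < 2 ^ l) : ∃ r : BStr, r.length = l ∧ binVal r = j := by
  induction l generalizing j with
  | zero => exact ⟨[], rfl, (Nat.lt_one_iff.1 hj).symm⟩
  | succ l ih =>
    obtain ⟨r, hr, hrj⟩ := ih (j := j / 2) (by omega)
    refine ⟨j.bodd :: r, by simp [hr], ?_⟩
    change Nat.bit j.bodd (binVal r) = j
    rw [hrj, ← Nat.div2_val, Nat.bit_bodd_div2]

theorem primrec_numStr : Primrec numStr :=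
  (Primrec.list_map Primrec.list_range (Primrec.const false).to₂).of_eq fun n => by
    simp [numStr]

theorem UniversalPlain.exists_cpxN_add_le {U : BStr →. BStr} (hU : UniversalPlain U) :
    ∃ c, ∀ n j, j < 2 ^ n → cpxN U (n + j) ≤ n + c := by
  have hM : Computable fun p : BStr => numStr (p.length + binVal p) :=
    (primrec_numStr.comp (Primrec.nat_add.comp Primrec.list_length primrec_binVal)).to_comp
  obtain ⟨c, hc⟩ := hU.exists_cpx_le hM.partrec
  refine ⟨c, fun n j hj => ?_⟩
  obtain ⟨r, rfl, rfl⟩ := exists_binVal_eq hj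
  exact hc r _ (Part.mem_some _)

/-! ### Uniform enumerations -/

section DistinctValues

variable {β : Type*} [DecidableEq β]

/-- The distinct values of `f 0, …, f (s - 1)`, in order of first appearance (`none` is not
a value). New values are appended at the end, so positions in the list are stable in `s`. -/
def distinctValues (f : ℕ → Option β) : ℕ → List β
  | 0 => []
  | s + 1 => distinctValues f s ++ (f s).toList.filter (· ∉ distinctValues f s)

theorem distinctValues_prefix_of_le (f : ℕ → Option β) {s t : ℕ} (h : s ≤ t) :
    distinctValues f s <+: distinctValues f t := by
  induction t, h using Nat.le_induction with
  | base => exact List.prefix_rfl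
  | succ t _ ih => exact ih.trans (List.prefix_append _ _)

theorem mem_distinctValues {f : ℕ → Option β} {s : ℕ} {x : β} :
    x ∈ distinctValues f s ↔ ∃ i < s, f i = some x := by
  induction s with
  | zero => simp [distinctValues]
  | succ s ih =>
    simp only [distinctValues, List.mem_append, List.mem_filter, Option.mem_toList,
      decide_eq_true_eq, Nat.exists_lt_succ_right, ← ih]
    tauto

theorem nodup_distinctValues (f : ℕ → Option β) (s : ℕ) : (distinctValues f s).Nodup := by
  induction s with
  | zero => exact List.nodup_nil
  | succ s ih =>
    refine ih.append ((Option.toList_nodup _).filter _) fun x hx hx' => ?_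
    simp [hx] at hx'

theorem length_distinctValues_le {f : ℕ → Option β} {N : ℕ}
    (hN : {x | ∃ s, f s = some x}.encard ≤ N) (s : ℕ) : (distinctValues f s).length ≤ N := by
  have hsub : ((distinctValues f s).toFinset : Set β) ⊆ {x | ∃ s, f s = some x} := fun x hx => by
    obtain ⟨i, -, hi⟩ := mem_distinctValues.1 (List.mem_toFinset.1 hx)
    exact ⟨i, hi⟩
  have h := (Set.encard_le_encard hsub).trans hN
  rw [Set.encard_coe_eq_coe_finsetCard, List.toFinset_card_of_nodup (nodup_distinctValues f s)] at h
  exact_mod_cast h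

end DistinctValues

section Enumeration

variable {α β γ : Type*} [Primcodable α] [Primcodable β] [Primcodable γ]

theorem primrec₂_pow : Primrec₂ fun m n : ℕ => m ^ n := by
  have h : Primrec₂ fun m n : ℕ => (Nat.rec 1 (fun _ v => v * m) n : ℕ) :=
    Primrec.nat_rec (Primrec.const 1)
      (Primrec.nat_mul.comp (Primrec.snd.comp Primrec.snd) Primrec.fst).to₂
  refine h.of_eq fun m n => ?_
  induction n with
  | zero => rfl
  | succ n ih => rw [pow_succ, ← ih]

theorem primrecRel_isPrefix : PrimrecRel fun l₁ l₂ : List α => l₁ <+: l₂ := by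
  have h : PrimrecRel fun l₁ l₂ : List α => l₁ = l₂.take l₁.length :=
    Primrec.eq.comp Primrec.fst
      (Primrec.list_take.comp (Primrec.list_length.comp Primrec.fst) Primrec.snd)
  exact h.of_eq fun _ _ => List.prefix_iff_eq_take.symm

theorem primrecRel_notMem : PrimrecRel fun (a : α) (l : List α) => a ∉ l :=
  (((Primrec.eq (α := α)).exists_mem_list.comp Primrec.snd Primrec.fst).not).of_eq fun w => by
    simp

theorem exists_primrecRel_mem_iff {φ : α →. β} (hφ : Partrec φ) :
    ∃ G : α × β → ℕ → Prop, PrimrecRel G ∧ ∀ p x, x ∈ φ p ↔ ∃ t, G (p, x) t := by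
  obtain ⟨c, hc⟩ := Nat.Partrec.Code.exists_code.1 hφ
  refine ⟨fun w t => c.evaln t (Encodable.encode w.1) = some (Encodable.encode w.2), ?_, ?_⟩
  · exact Primrec.eq.comp
      (Nat.Partrec.Code.primrec_evaln.comp ((Primrec.snd.pair (Primrec.const c)).pair
        (Primrec.encode.comp (Primrec.fst.comp Primrec.fst))))
      (Primrec.option_some.comp (Primrec.encode.comp (Primrec.snd.comp Primrec.fst)))
  · intro p x
    have h : x ∈ φ p ↔ Encodable.encode x ∈ c.eval (Encodable.encode p) := by
      simp [hc]
    rw [h, Nat.Partrec.Code.evaln_complete]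
    rfl

theorem exists_primrec₂_enumeration {R : α → β × γ → Prop} (hR : PrimrecRel R) :
    ∃ f : α → ℕ → Option β, Primrec₂ f ∧ ∀ a x, (∃ s, f a s = some x) ↔ ∃ w, R a (x, w) := by
  classical
  refine ⟨fun a s => (Encodable.decode (α := β × γ) s).bind fun v =>
    if R a v then some v.1 else none, ?_, fun a x => ⟨?_, ?_⟩⟩
  · exact Primrec.option_bind (Primrec.decode.comp Primrec.snd)
      (Primrec.ite (hR.comp (Primrec.fst.comp Primrec.fst) Primrec.snd)
        (Primrec.option_some.comp (Primrec.fst.comp Primrec.snd)) (Primrec.const none))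
  · rintro ⟨s, hs⟩
    obtain ⟨⟨y, w⟩, -, hv⟩ := Option.bind_eq_some_iff.1 hs
    obtain ⟨hRv, rfl⟩ : R a (y, w) ∧ y = x := by simpa using hv
    exact ⟨w, hRv⟩
  · rintro ⟨w, hw⟩
    exact ⟨Encodable.encode (x, w), by simp [hw]⟩

theorem primrec₂_distinctValues [DecidableEq β] {f : α → ℕ → Option β} (hf : Primrec₂ f) :
    Primrec₂ fun a s => distinctValues (f a) s := by
  have h : Primrec₂ fun a s => (Nat.rec []
      (fun s l => l ++ (f a s).toList.filter (· ∉ l)) s : List β) := by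
    refine Primrec.nat_rec (Primrec.const [])
      (g := fun a w => w.2 ++ (f a w.1).toList.filter (· ∉ w.2)) ?_
    have hl : Primrec fun v : α × ℕ × List β => v.2.2 := Primrec.snd.comp Primrec.snd
    exact Primrec.list_append.comp hl (primrecRel_notMem.listFilter.comp
      (Primrec.optionToList.comp (hf.comp Primrec.fst (Primrec.fst.comp Primrec.snd))) hl)
  refine h.of_eq fun a s => ?_
  induction s with
  | zero => rfl
  | succ s ih => simp only [distinctValues, ← ih]

theorem exists_partrec₂_index {f : α → ℕ → Option β} (hf : Primrec₂ f) :
    ∃ g : α → ℕ →. β, Partrec₂ g ∧ ∀ a (N : ℕ), {x | ∃ s, f a s = some x}.encard ≤ N →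
      ∀ x s, f a s = some x → ∃ j < N, x ∈ g a j := by
  classical
  have hg : Primrec₂ fun (w : α × ℕ) s => (distinctValues (f w.1) s)[w.2]? :=
    Primrec.list_getElem?.comp
      ((primrec₂_distinctValues hf).comp (Primrec.fst.comp Primrec.fst) Primrec.snd)
      (Primrec.snd.comp Primrec.fst)
  refine ⟨fun a j => Nat.rfindOpt fun s => (distinctValues (f a) s)[j]?,
    Partrec.rfindOpt hg.to_comp, fun a N hN x s hs => ?_⟩
  obtain ⟨j, hj, hjx⟩ := List.mem_iff_getElem.1 (mem_distinctValues.2 ⟨s, s.lt_succ_self, hs⟩)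
  refine ⟨j, hj.trans_le (length_distinctValues_le hN _), (Nat.rfindOpt_mono ?_).2
    ⟨s + 1, List.getElem?_eq_some_iff.2 ⟨hj, hjx⟩⟩⟩
  intro y m n hmn hy
  obtain ⟨t, ht⟩ := distinctValues_prefix_of_le (f a) hmn
  obtain ⟨hj, -⟩ := List.getElem?_eq_some_iff.1 hy
  rwa [← ht, List.getElem?_append_left hj]

theorem exists_partrec_leftInverse {h : α → β} (hh : Primrec h)
    (hinj : Function.Injective h) : ∃ g : β →. α, Partrec g ∧ ∀ y x, x ∈ g y ↔ h x = y := by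
  obtain ⟨f, hf, hfh⟩ := exists_primrec₂_enumeration (γ := Unit)
    (R := fun y (w : α × Unit) => h w.1 = y)
    (Primrec.eq.comp (hh.comp (Primrec.fst.comp Primrec.snd)) Primrec.fst)
  refine ⟨fun y => Nat.rfindOpt (f y), Partrec.rfindOpt hf.to_comp, fun y x => ?_⟩
  have sound {x : α} (hx : x ∈ Nat.rfindOpt (f y)) : h x = y := by
    obtain ⟨_, hxy⟩ := (hfh y x).1 (Nat.rfindOpt_spec hx)
    exact hxy
  refine ⟨sound, fun hx => ?_⟩
  obtain ⟨s, hs⟩ := (hfh y x).2 ⟨(), hx⟩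
  obtain ⟨z, hz⟩ := Part.dom_iff_mem.1 (Nat.rfindOpt_dom.2 ⟨s, x, hs⟩)
  rwa [hinj (hx.trans (sound hz).symm)]

end Enumeration

/-! ### Self-delimiting codes -/

/-- The self-delimiting code `1^|r| 0 r` of the string `r`. -/
def selfDelim (r : BStr) : BStr := List.replicate r.length true ++ false :: r

theorem length_selfDelim (r : BStr) : (selfDelim r).length = 2 * r.length + 1 := by
  simp only [selfDelim, List.length_append, List.length_replicate, List.length_cons]
  omega

theorem primrec_selfDelim : Primrec selfDelim := by
  have h : Primrec fun r : BStr => r.map (fun _ => true) ++ false :: r :=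
    Primrec.list_append.comp (Primrec.list_map Primrec.id (Primrec.const true).to₂)
      (Primrec.list_cons.comp (Primrec.const false) Primrec.id)
  exact h.of_eq fun r => by simp [selfDelim]

theorem selfDelim_append_inj {r r' q q' : BStr} :
    selfDelim r ++ q = selfDelim r' ++ q' ↔ r = r' ∧ q = q' := by
  have idxOf_false (r q : BStr) : (selfDelim r ++ q).idxOf false = r.length := by
    rw [selfDelim, List.append_assoc, List.idxOf_append_of_notMem (by simp)]
    simp
  refine ⟨fun h => ?_, by rintro ⟨rfl, rfl⟩; rfl⟩
  have hlen : r.length = r'.length := by rw [← idxOf_false r q, h, idxOf_false]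
  obtain ⟨hr, hq⟩ := List.append_inj h (by rw [length_selfDelim, length_selfDelim, hlen])
  exact ⟨List.tail_eq_of_cons_eq (List.append_inj hr (by simp [hlen])).2, hq⟩

theorem selfDelim_append_injective :
    Function.Injective fun w : BStr × BStr => selfDelim w.1 ++ w.2 := fun _ _ h =>
  Prod.ext_iff.2 (selfDelim_append_inj.1 h)

theorem UniversalPrefixFree.exists_cpx_le_of_partrec₂ {U : BStr →. BStr}
    (hU : UniversalPrefixFree U) {ψ : BStr → BStr →. BStr} (hψ : Partrec₂ ψ) :
    ∃ d, ∀ r y x, x ∈ ψ r y → cpx U x ≤ cpx U y + 2 * r.length + d := by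
  obtain ⟨dec, hdec, mem_dec⟩ := exists_partrec_leftInverse
    (Primrec.list_append.comp (primrec_selfDelim.comp Primrec.fst) Primrec.snd)
    selfDelim_append_injective
  let M : BStr →. BStr := fun p => (dec p).bind fun w => (U w.2).bind (ψ w.1)
  have mem_M {p x : BStr} : x ∈ M p ↔ ∃ r q, selfDelim r ++ q = p ∧ ∃ y ∈ U q, x ∈ ψ r y := by
    simp only [M, Part.mem_bind_iff, mem_dec, Prod.exists]
    grind
  have hM : Partrec M :=
    hdec.bind ((hU.1.comp (Computable.snd.comp Computable.snd)).bind
      (hψ.comp (Computable.fst.comp (Computable.snd.comp Computable.fst)) Computable.snd))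
  have hpf : PrefixFreeDom M := by
    rintro p p' hp hp' ⟨s, rfl⟩
    obtain ⟨x, hx⟩ := Part.dom_iff_mem.1 hp
    obtain ⟨x', hx'⟩ := Part.dom_iff_mem.1 hp'
    obtain ⟨r, q, rfl, y, hy, -⟩ := mem_M.1 hx
    obtain ⟨r', q', h, y', hy', -⟩ := mem_M.1 hx'
    rw [List.append_assoc, selfDelim_append_inj] at h
    obtain ⟨rfl, rfl⟩ := h
    rw [List.append_assoc, ← hU.2.1 q (q ++ s) (Part.dom_iff_mem.2 ⟨y, hy⟩)
      (Part.dom_iff_mem.2 ⟨y', hy'⟩) (List.prefix_append q s)]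
  obtain ⟨c, hc⟩ := hU.exists_cpx_le hM hpf
  refine ⟨c + 1, fun r y x hx => ?_⟩
  obtain ⟨p, hp⟩ := hU.exists_mem y
  obtain ⟨q, hq, hyq⟩ := exists_length_eq_cpx hp
  have h := hc (selfDelim r ++ q) x (mem_M.2 ⟨r, q, rfl, y, hyq, hx⟩)
  rw [List.length_append, length_selfDelim, hq] at h
  omega

/-! ### Strings with many short extensions -/

/-- For each of the lengths `|σ|, …, |σ| + 2 ^ |σ| - 1`, the string `σ` has an extension of that
length produced by a `U`-program of length less than `|σ| + k`. All initial segments of a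
C-trivial sequence have this property, for some `k` depending on the triviality constant. -/
def HasShortExtensions (U : BStr →. BStr) (k : ℕ) (σ : BStr) : Prop :=
  ∀ j < 2 ^ σ.length, ∃ p x, x ∈ U p ∧ p.length < σ.length + k ∧ x.length = σ.length + j ∧ σ <+: x

theorem length_seg (A : Cantor) (n : ℕ) : (seg A n).length = n := List.length_ofFn

theorem seg_prefix_seg_add (A : Cantor) (n j : ℕ) : seg A n <+: seg A (n + j) :=
  ⟨List.ofFn fun i : Fin j => A (n + i), (List.ofFn_add (f := fun i : Fin (n + j) => A i)).symm⟩

theorem exists_hasShortExtensions_seg {U : BStr →. BStr} (hU : UniversalPlain U) :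
    ∃ c, ∀ (b : ℕ) (A : Cantor), (∀ n, cpx U (seg A n) ≤ cpxN U n + b) →
      ∀ n, HasShortExtensions U (b + c) (seg A n) := by
  obtain ⟨c, hc⟩ := hU.exists_cpxN_add_le
  refine ⟨c + 1, fun b A hA n j hj => ?_⟩
  rw [length_seg] at hj ⊢
  obtain ⟨p, hp⟩ := hU.exists_mem (seg A (n + j))
  obtain ⟨q, hq, hxq⟩ := exists_length_eq_cpx hp
  have hshort : q.length ≤ n + c + b := calc
    q.length = cpx U (seg A (n + j)) := hq
    _ ≤ cpxN U (n + j) + b := hA (n + j)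
    _ ≤ n + c + b := by gcongr; exact hc n j hj
  exact ⟨q, seg A (n + j), hxq, by omega, length_seg A _, seg_prefix_seg_add A n j⟩

theorem encard_length_lt_le (m : ℕ) : {p : BStr | p.length < m}.encard ≤ (2 ^ m : ℕ) := by
  let ofLength (l : ℕ) : Finset BStr :=
    (Finset.univ : Finset (List.Vector Bool l)).image List.Vector.toList
  have hsub : {p : BStr | p.length < m} ⊆ ((Finset.range m).biUnion ofLength : Set BStr) := by
    intro p hp
    simp only [ofLength, Finset.coe_biUnion, Set.mem_iUnion, Finset.coe_range]
    exact ⟨p.length, hp, Finset.mem_image.2 ⟨⟨p, rfl⟩, Finset.mem_univ _, rfl⟩⟩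
  have hcard : ((Finset.range m).biUnion ofLength).card ≤ 2 ^ m := calc
    _ ≤ ∑ l ∈ Finset.range m, (ofLength l).card := Finset.card_biUnion_le
    _ ≤ ∑ l ∈ Finset.range m, 2 ^ l := by
      gcongr with l
      exact Finset.card_image_le.trans_eq (by simp)
    _ ≤ 2 ^ m := (Nat.geomSum_lt le_rfl fun _ => Finset.mem_range.1).le
  refine (Set.encard_le_encard hsub).trans ?_
  rw [Set.encard_coe_eq_coe_finsetCard]
  exact_mod_cast hcard

theorem encard_hasShortExtensions_le (U : BStr →. BStr) (n k : ℕ) :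
    {σ | σ.length = n ∧ HasShortExtensions U k σ}.encard ≤ (2 ^ k : ℕ) := by
  set S := {σ | σ.length = n ∧ HasShortExtensions U k σ}
  have hprog : ∀ w ∈ S ×ˢ Set.Iio (2 ^ n), ∃ p : BStr, p.length < n + k ∧
      ∃ x ∈ U p, x.length = n + w.2 ∧ w.1 <+: x := by
    rintro ⟨σ, j⟩ ⟨⟨rfl, hσ⟩, hj⟩
    obtain ⟨p, x, hx, hp, hlen, hpre⟩ := hσ j hj
    exact ⟨p, hp, x, hx, hlen, hpre⟩
  choose! prog hshort hext using hprog
  have hinj : Set.InjOn prog (S ×ˢ Set.Iio (2 ^ n)) := by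
    rintro ⟨σ, i⟩ hσ ⟨τ, j⟩ hτ h
    obtain ⟨x, hx, hxi, hσx⟩ := hext _ hσ
    obtain ⟨y, hy, hyj, hτy⟩ := hext _ hτ
    have hlen : σ.length = τ.length := hσ.1.1.trans hτ.1.1.symm
    obtain rfl : x = y := Part.mem_unique hx (h ▸ hy)
    have hστ : σ = τ :=
      (List.prefix_of_prefix_length_le hσx hτy hlen.le).eq_of_length hlen
    exact Prod.ext hστ (by simpa using hxi.symm.trans hyj)
  have hmul : S.encard * (2 ^ n : ℕ) ≤ (2 ^ k : ℕ) * (2 ^ n : ℕ) := calc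
    _ = (S ×ˢ Set.Iio (2 ^ n)).encard := by
      rw [Set.encard_prod, ← Finset.coe_Iio, Set.encard_coe_eq_coe_finsetCard, Nat.card_Iio]
    _ ≤ {p : BStr | p.length < n + k}.encard := Set.encard_le_encard_of_injOn hshort hinj
    _ ≤ (2 ^ (n + k) : ℕ) := encard_length_lt_le (n + k)
    _ = (2 ^ k : ℕ) * (2 ^ n : ℕ) := by rw [← Nat.cast_mul, ← pow_add, add_comm]
  exact (ENat.mul_le_mul_right_iff (by simp) (ENat.natCast_ne_top _)).1 hmul

/-- `l` is a finite certificate for `HasShortExtensions U k σ`, made up of triples `((p, x), t)`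
in which `t` witnesses `U p = x` with respect to the primitive recursive relation `G`. -/
def CertifiesShortExtensions (G : BStr × BStr → ℕ → Prop) (k : ℕ) (σ : BStr)
    (l : List ((BStr × BStr) × ℕ)) : Prop :=
  ∀ j < 2 ^ σ.length, ∃ w ∈ l,
    G w.1 w.2 ∧ w.1.1.length < σ.length + k ∧ w.1.2.length = σ.length + j ∧ σ <+: w.1.2

theorem hasShortExtensions_iff_exists_certifies {U : BStr →. BStr} {G : BStr × BStr → ℕ → Prop}
    (hG : ∀ p x, x ∈ U p ↔ ∃ t, G (p, x) t) {k : ℕ} {σ : BStr} :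
    HasShortExtensions U k σ ↔ ∃ l, CertifiesShortExtensions G k σ l := by
  constructor
  · intro h
    simp only [HasShortExtensions, hG] at h
    choose! p x ht hp hlen hpre using h
    choose! t ht using ht
    refine ⟨(List.range (2 ^ σ.length)).map fun j => ((p j, x j), t j), fun j hj => ?_⟩
    exact ⟨_, List.mem_map.2 ⟨j, List.mem_range.2 hj, rfl⟩, ht j hj, hp j hj, hlen j hj, hpre j hj⟩
  · rintro ⟨l, hl⟩ j hj
    obtain ⟨⟨⟨p, x⟩, t⟩, -, hpx, hw⟩ := hl j hj
    exact ⟨p, x, (hG p x).2 ⟨t, hpx⟩, hw⟩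

theorem primrecRel_certifiesShortExtensions {G : BStr × BStr → ℕ → Prop} (hG : PrimrecRel G) :
    PrimrecRel fun (v : ℕ × BStr) l => CertifiesShortExtensions G v.1 v.2 l := by
  have hentry : PrimrecRel fun (w : (BStr × BStr) × ℕ) (v : (ℕ × BStr) × ℕ) =>
      G w.1 w.2 ∧ w.1.1.length < v.1.2.length + v.1.1 ∧
        w.1.2.length = v.1.2.length + v.2 ∧ v.1.2 <+: w.1.2 := by
    have hpx : Primrec fun u : ((BStr × BStr) × ℕ) × (ℕ × BStr) × ℕ => u.1.1 :=
      Primrec.fst.comp Primrec.fst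
    have hkσ : Primrec fun u : ((BStr × BStr) × ℕ) × (ℕ × BStr) × ℕ => u.2.1 :=
      Primrec.fst.comp Primrec.snd
    have hσ := Primrec.snd.comp hkσ
    have hσ_length := Primrec.list_length.comp hσ
    exact (hG.comp hpx (Primrec.snd.comp Primrec.fst)).and
      ((Primrec.nat_lt.comp (Primrec.list_length.comp (Primrec.fst.comp hpx))
          (Primrec.nat_add.comp hσ_length (Primrec.fst.comp hkσ))).and
        ((Primrec.eq.comp (Primrec.list_length.comp (Primrec.snd.comp hpx))
            (Primrec.nat_add.comp hσ_length (Primrec.snd.comp Primrec.snd))).and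
          (primrecRel_isPrefix.comp hσ (Primrec.snd.comp hpx))))
  have hlength : PrimrecRel fun (j : ℕ) (v : (ℕ × BStr) × List ((BStr × BStr) × ℕ)) =>
      ∃ w ∈ v.2, G w.1 w.2 ∧ w.1.1.length < v.1.2.length + v.1.1 ∧
        w.1.2.length = v.1.2.length + j ∧ v.1.2 <+: w.1.2 :=
    hentry.exists_mem_list.comp (Primrec.snd.comp Primrec.snd)
      ((Primrec.fst.comp Primrec.snd).pair Primrec.fst)
  have hrange : Primrec fun v : (ℕ × BStr) × List ((BStr × BStr) × ℕ) =>
      List.range (2 ^ v.1.2.length) :=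
    Primrec.list_range.comp (primrec₂_pow.comp (Primrec.const 2)
      (Primrec.list_length.comp (Primrec.snd.comp Primrec.fst)))
  exact (hlength.forall_mem_list.comp hrange Primrec.id).of_eq fun v => by
    simp only [List.mem_range, id, CertifiesShortExtensions]

theorem exists_primrec₂_enumeration_hasShortExtensions {U : BStr →. BStr} (hU : Partrec U) :
    ∃ f : ℕ × ℕ → ℕ → Option BStr, Primrec₂ f ∧ ∀ n k σ,
      (∃ s, f (n, k) s = some σ) ↔ σ.length = n ∧ HasShortExtensions U k σ := by
  obtain ⟨G, hG, hGU⟩ := exists_primrecRel_mem_iff hU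
  have hR : PrimrecRel fun (a : ℕ × ℕ) (v : BStr × List ((BStr × BStr) × ℕ)) =>
      v.1.length = a.1 ∧ CertifiesShortExtensions G a.2 v.1 v.2 := by
    have hσ : Primrec fun u : (ℕ × ℕ) × BStr × List ((BStr × BStr) × ℕ) => u.2.1 :=
      Primrec.fst.comp Primrec.snd
    exact (Primrec.eq.comp (Primrec.list_length.comp hσ) (Primrec.fst.comp Primrec.fst)).and
      ((primrecRel_certifiesShortExtensions hG).comp
        ((Primrec.snd.comp Primrec.fst).pair hσ) (Primrec.snd.comp Primrec.snd))
  obtain ⟨f, hf, hfR⟩ := exists_primrec₂_enumeration hR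
  refine ⟨f, hf, fun n k σ => ?_⟩
  simp only [hfR, hasShortExtensions_iff_exists_certifies hGU, exists_and_left]

theorem exists_cpx_le_of_hasShortExtensions {U UK : BStr →. BStr} (hU : Partrec U)
    (hUK : UniversalPrefixFree UK) :
    ∃ d, ∀ k σ, HasShortExtensions U k σ → cpx UK σ ≤ cpxN UK σ.length + 2 * k + d := by
  obtain ⟨f, hf, hfU⟩ := exists_primrec₂_enumeration_hasShortExtensions hU
  obtain ⟨g, hg, exists_index⟩ := exists_partrec₂_index hf
  have hψ : Partrec₂ fun r y : BStr => g (y.length, r.length) (binVal r) :=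
    hg.comp ((Computable.list_length.comp Computable.snd).pair
      (Computable.list_length.comp Computable.fst)) (primrec_binVal.to_comp.comp Computable.fst)
  obtain ⟨d, hd⟩ := hUK.exists_cpx_le_of_partrec₂ hψ
  refine ⟨d, fun k σ hσ => ?_⟩
  obtain ⟨s, hs⟩ := (hfU σ.length k σ).2 ⟨rfl, hσ⟩
  obtain ⟨j, hj, hjσ⟩ := exists_index (σ.length, k) (2 ^ k)
    (by simpa only [hfU] using encard_hasShortExtensions_le U σ.length k) σ s hs
  obtain ⟨r, rfl, rfl⟩ := exists_binVal_eq hj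
  exact hd r (numStr σ.length) σ (by simpa [numStr] using hjσ)

theorem C_trivial_implies_K_trivial_effectively_general
    (U UK : BStr →. BStr) (hU : UniversalPlain U) (hUK : UniversalPrefixFree UK) :
    ∃ d : ℕ, ∀ (b : ℕ) (A : Cantor),
      (∀ n : ℕ, cpx U (seg A n) ≤ cpxN U n + b) →
      (∀ n : ℕ, cpx UK (seg A n) ≤ cpxN UK n + 2 * b + d) := by
  obtain ⟨c, hc⟩ := exists_hasShortExtensions_seg hU
  obtain ⟨d, hd⟩ := exists_cpx_le_of_hasShortExtensions hU.1 hUK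
  refine ⟨2 * c + d, fun b A hA n => ?_⟩
  have h := hd (b + c) (seg A n) (hc b A hA n)
  rw [length_seg] at h
  omega

/-- there is a constant `d` such that for every `b`, every
`A ∈ 2^ℕ` that is C-trivial via `b` is K-trivial via `2b + d`. -/
theorem C_trivial_implies_K_trivial_effectively
    (U UK : BStr →. BStr) (hU : UniversalPlain U) (hUK : UniversalPrefixFree UK)
    (hlenC : ∀ x : BStr, cpxN U x.length ≤ cpx U x)
    (hlenK : ∀ x : BStr, cpxN UK x.length ≤ cpx UK x) :
    ∃ d : ℕ, ∀ (b : ℕ) (A : Cantor),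
      (∀ n : ℕ, cpx U (seg A n) ≤ cpxN U n + b) →
      (∀ n : ℕ, cpx UK (seg A n) ≤ cpxN UK n + 2 * b + d) :=
  C_trivial_implies_K_trivial_effectively_general U UK hU hUK
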